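/- Let F be a field and let S_n act on the rational function field F(x_1, ..., x_n) by permuting variables. If a rational function f in x_1, ..., x_n is invariant under every permutation of the variables that fixes x_1, then f lies in the subfield F(σ_1, ..., σ_n, x_1) generated by the elementary symmetric polynomials σ_1, ..., σ_n together with x_1; i.e., f is expressible as a rational function of σ_1, ..., σ_n and x_1. -/

import Mathlib

open MvPolynomial

/-- The action of a permutation of the variables on the field of rational functions
`F(x₁, …, xₙ)`, realized as the fraction field of the polynomial ring. -/
noncomputable def permAct (F : Type*) [Field F] (n : ℕ) (σ : Equiv.Perm (Fin n)) :
    FractionRing (MvPolynomial (Fin n) F) ≃+* FractionRing (MvPolynomial (Fin n) F) :=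
  IsFractionRing.ringEquivOfRingEquiv (MvPolynomial.renameEquiv F σ).toRingEquiv

/-- The `i`-th variable, as an element of the field of rational functions. -/
noncomputable abbrev fracX (F : Type*) [Field F] (n : ℕ) (i : Fin n) :
    FractionRing (MvPolynomial (Fin n) F) :=
  algebraMap (MvPolynomial (Fin n) F) (FractionRing (MvPolynomial (Fin n) F)) (X i)

lemma fracX_injective (F : Type*) [Field F] (n : ℕ) : Function.Injective (fracX F n) :=
  (IsFractionRing.injective (MvPolynomial (Fin n) F) _).comp X_injective

/-- Two ring homomorphisms out of the field of rational functions agree as soon as they agree on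
constants and variables. -/
lemma ringHom_ext_fracX {F : Type*} [Field F] {n : ℕ} {L : Type*} [Field L]
    {g h : FractionRing (MvPolynomial (Fin n) F) →+* L}
    (hC : ∀ a : F, g (algebraMap F _ a) = h (algebraMap F _ a))
    (hX : ∀ i, g (fracX F n i) = h (fracX F n i)) : g = h := by
  refine IsLocalization.ringHom_ext (nonZeroDivisors (MvPolynomial (Fin n) F)) ?_
  refine MvPolynomial.ringHom_ext (fun a => ?_) hX
  simpa [IsScalarTower.algebraMap_apply F (MvPolynomial (Fin n) F)
    (FractionRing (MvPolynomial (Fin n) F)), MvPolynomial.algebraMap_eq] using hC a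

lemma permAct_algebraMap (F : Type*) [Field F] (n : ℕ) (σ : Equiv.Perm (Fin n))
    (p : MvPolynomial (Fin n) F) :
    permAct F n σ (algebraMap _ _ p) = algebraMap _ _ (rename σ p) := by
  simp [permAct]

lemma permAct_fracX (F : Type*) [Field F] (n : ℕ) (σ : Equiv.Perm (Fin n)) (i : Fin n) :
    permAct F n σ (fracX F n i) = fracX F n (σ i) := by
  simp [fracX, permAct_algebraMap]

lemma permAct_algebraMap_base (F : Type*) [Field F] (n : ℕ) (σ : Equiv.Perm (Fin n)) (a : F) :
    permAct F n σ (algebraMap F _ a) = algebraMap F _ a := by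
  rw [IsScalarTower.algebraMap_apply F (MvPolynomial (Fin n) F), permAct_algebraMap,
    MvPolynomial.algebraMap_eq, rename_C]

/-- The variables generate the field of rational functions over any intermediate field. -/
lemma adjoin_range_fracX {F : Type*} [Field F] {n : ℕ}
    (K : IntermediateField F (FractionRing (MvPolynomial (Fin n) F))) :
    IntermediateField.adjoin K (Set.range (fracX F n)) = ⊤ := by
  rw [eq_top_iff]
  rintro x -
  have hpoly (p : MvPolynomial (Fin n) F) :
      algebraMap _ (FractionRing (MvPolynomial (Fin n) F)) p ∈
        IntermediateField.adjoin K (Set.range (fracX F n)) := by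
    induction p using MvPolynomial.induction_on with
    | C a =>
      rw [← MvPolynomial.algebraMap_eq, ← IsScalarTower.algebraMap_apply]
      exact IntermediateField.algebraMap_mem _ (algebraMap F K a)
    | add p q hp hq => rw [map_add]; exact add_mem hp hq
    | mul_X p i hp =>
      rw [map_mul]
      exact mul_mem hp (IntermediateField.subset_adjoin _ _ ⟨i, rfl⟩)
  obtain ⟨p, q, -, rfl⟩ := IsFractionRing.div_surjective (A := MvPolynomial (Fin n) F) x
  exact div_mem (hpoly p) (hpoly q)

/-- The polynomial `∏ (T - xᵢ)` has coefficients in every intermediate field containing the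
elementary symmetric polynomials. -/
lemma exists_map_eq_prod_X_sub_C {F : Type*} [Field F] {n : ℕ}
    (K : IntermediateField F (FractionRing (MvPolynomial (Fin n) F)))
    (hK : ∀ k : Fin n, algebraMap (MvPolynomial (Fin n) F) _ (esymm (Fin n) F (k + 1)) ∈ K) :
    ∃ q : Polynomial K, q.map (algebraMap K _) =
      ∏ i, (Polynomial.X - Polynomial.C (fracX F n i)) := by
  rw [← Polynomial.mem_lifts, Polynomial.lifts_iff_coeff_lifts]
  intro k
  suffices h : (∏ i, (Polynomial.X - Polynomial.C (fracX F n i))).coeff k ∈ K from ⟨⟨_, h⟩, rfl⟩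
  have hesymm (j : ℕ) (hj : j ≤ n) : (Finset.univ.val.map (fracX F n)).esymm j ∈ K := by
    have h : (Finset.univ.val.map (fracX F n)).esymm j =
        algebraMap (MvPolynomial (Fin n) F) _ (esymm (Fin n) F j) := by
      rw [← aeval_esymm_eq_multiset_esymm (Fin n) F]
      exact (aeval_algebraMap_apply _ X _).trans (by rw [aeval_X_left_apply])
    rw [h]
    cases j with
    | zero => simp
    | succ j => exact hK ⟨j, hj⟩
  have hprod : ∏ i, (Polynomial.X - Polynomial.C (fracX F n i)) =
      ((Finset.univ.val.map (fracX F n)).map fun t => Polynomial.X - Polynomial.C t).prod := by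
    rw [Multiset.map_map]; rfl
  by_cases hk : k ≤ n
  · rw [hprod, Multiset.prod_X_sub_C_coeff _ (by simpa using hk)]
    exact mul_mem (pow_mem (neg_mem (one_mem K)) _) (hesymm _ (by simp))
  · rw [Polynomial.coeff_eq_zero_of_natDegree_lt]
    · exact zero_mem K
    · simpa using hk

section Galois

variable {ι K L : Type*} [Fintype ι] [Field K] [Field L] [Algebra K L] {x : ι → L}
  {q : Polynomial K}

lemma separable_of_map_eq_prod_X_sub_C (hx : Function.Injective x)
    (hq : q.map (algebraMap K L) = ∏ i, (Polynomial.X - Polynomial.C (x i))) : q.Separable := by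
  rw [← Polynomial.separable_map (algebraMap K L), hq, Polynomial.separable_prod_X_sub_C_iff]
  exact hx

lemma rootSet_of_map_eq_prod_X_sub_C
    (hq : q.map (algebraMap K L) = ∏ i, (Polynomial.X - Polynomial.C (x i))) :
    q.rootSet L = Set.range x := by
  ext y
  rw [Polynomial.mem_rootSet', hq, Polynomial.aeval_def, ← Polynomial.eval_map, hq,
    Polynomial.eval_prod]
  have hne : ∏ i, (Polynomial.X - Polynomial.C (x i)) ≠ 0 :=
    Finset.prod_ne_zero_iff.mpr fun i _ => Polynomial.X_sub_C_ne_zero _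
  simp [hne, Finset.prod_eq_zero_iff, sub_eq_zero, eq_comm (a := y)]

/-- An automorphism over the field of coefficients of `∏ (T - xᵢ)` permutes the `xᵢ`. -/
lemma exists_perm_of_map_eq_prod_X_sub_C (hx : Function.Injective x)
    (hq : q.map (algebraMap K L) = ∏ i, (Polynomial.X - Polynomial.C (x i))) (g : Gal(L/K)) :
    ∃ σ : Equiv.Perm ι, ∀ i, g (x i) = x (σ i) := by
  have hg (i : ι) : ∃ j, x j = g (x i) := by
    have hi : x i ∈ q.rootSet L := rootSet_of_map_eq_prod_X_sub_C hq ▸ Set.mem_range_self i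
    have hgi : g (x i) ∈ q.rootSet L := by
      have hq0 := (separable_of_map_eq_prod_X_sub_C hx hq).ne_zero
      rw [Polynomial.mem_rootSet_of_ne hq0] at hi ⊢
      rw [Polynomial.aeval_algHom_apply, hi, map_zero]
    rwa [rootSet_of_map_eq_prod_X_sub_C hq] at hgi
  choose s hs using hg
  have hs_inj : Function.Injective s := fun i j hij => hx (g.injective (by rw [← hs, ← hs, hij]))
  exact ⟨Equiv.ofBijective s (Finite.injective_iff_bijective.mp hs_inj), fun i => (hs i).symm⟩

/-- If distinct elements `xᵢ` generate `L` over `K` and `∏ (T - xᵢ)` has coefficients in `K`, then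
an element of `L` fixed by all automorphisms over `K` lies in `K`. -/
lemma mem_range_algebraMap_of_map_eq_prod_X_sub_C (hx : Function.Injective x)
    (hq : q.map (algebraMap K L) = ∏ i, (Polynomial.X - Polynomial.C (x i)))
    (htop : IntermediateField.adjoin K (Set.range x) = ⊤) {y : L}
    (hy : ∀ g : Gal(L/K), g y = y) : y ∈ Set.range (algebraMap K L) := by
  have hsplit : q.IsSplittingField K L := by
    rw [isSplittingField_iff_intermediateField, rootSet_of_map_eq_prod_X_sub_C hq, hq]
    exact ⟨Polynomial.Splits.prod fun i _ => Polynomial.Splits.X_sub_C _, htop⟩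
  have : IsGalois K L :=
    IsGalois.of_separable_splitting_field (separable_of_map_eq_prod_X_sub_C hx hq)
  have : FiniteDimensional K L := Polynomial.IsSplittingField.finiteDimensional _ q
  exact (IsGalois.mem_range_algebraMap_iff_fixed y).mpr hy

end Galois

/-- A rational function invariant under every permutation of the variables fixing `xᵢ` lies in
every intermediate field containing `xᵢ` and the elementary symmetric polynomials. -/
lemma mem_of_permAct_eq {F : Type*} [Field F] {n : ℕ}
    (K : IntermediateField F (FractionRing (MvPolynomial (Fin n) F)))
    (hK : ∀ k : Fin n, algebraMap (MvPolynomial (Fin n) F) _ (esymm (Fin n) F (k + 1)) ∈ K)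
    {i : Fin n} (hX : fracX F n i ∈ K) {f : FractionRing (MvPolynomial (Fin n) F)}
    (hf : ∀ σ : Equiv.Perm (Fin n), σ i = i → permAct F n σ f = f) : f ∈ K := by
  obtain ⟨q, hq⟩ := exists_map_eq_prod_X_sub_C K hK
  have hx := fracX_injective F n
  suffices h : f ∈ Set.range (algebraMap K _) by
    obtain ⟨y, rfl⟩ := h
    exact y.2
  refine mem_range_algebraMap_of_map_eq_prod_X_sub_C hx hq (adjoin_range_fracX _) fun g => ?_
  obtain ⟨σ, hσ⟩ := exists_perm_of_map_eq_prod_X_sub_C hx hq g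
  have hσi : σ i = i := hx ((hσ _).symm.trans (g.commutes ⟨_, hX⟩))
  have hgσ : (g.toRingEquiv : FractionRing (MvPolynomial (Fin n) F) →+* _) =
      (permAct F n σ).toRingHom :=
    ringHom_ext_fracX
      (fun a => (g.commutes (algebraMap F _ a)).trans (permAct_algebraMap_base F n σ a).symm)
      fun j => (hσ j).trans (permAct_fracX F n σ j).symm
  exact (DFunLike.congr_fun hgσ f).trans (hf σ hσi)

/-- A rational function invariant under every permutation of the variables fixing `x₁`
is a rational function of the elementary symmetric polynomials and `x₁`. -/
theorem stmt_12 (F : Type*) [Field F] (n : ℕ) (hn : 0 < n)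
    (f : FractionRing (MvPolynomial (Fin n) F))
    (hf : ∀ σ : Equiv.Perm (Fin n), σ ⟨0, hn⟩ = ⟨0, hn⟩ → permAct F n σ f = f) :
    f ∈ IntermediateField.adjoin F
      ((Set.range fun k : Fin n =>
          algebraMap (MvPolynomial (Fin n) F) (FractionRing (MvPolynomial (Fin n) F))
            (esymm (Fin n) F ((k : ℕ) + 1))) ∪
        {algebraMap (MvPolynomial (Fin n) F) (FractionRing (MvPolynomial (Fin n) F))
          (X ⟨0, hn⟩)}) := by
  exact mem_of_permAct_eq _
    (fun k => IntermediateField.subset_adjoin _ _ (Or.inl ⟨k, rfl⟩))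
    (IntermediateField.subset_adjoin _ _ (Or.inr rfl)) hf
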